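/- Let U ⊆ ℂⁿ be open, ρ : U → ℝ a C² function, K > 0, s ∈ (0,1), and set r(z) := e^{−K|z|²} ρ(z). Then for every z ∈ U with ρ(z) < 0 and every (0,q)-coefficient system u (1 ≤ q ≤ n): i∂∂̄(−(−r)^s)(u,u)(z) = s(−ρ(z))^{s−2} e^{−sK|z|²} · { K ρ(z)² [ q|u|² − sK Σ'_{|J|=q−1} |Σ_{k=1}^n conj(z_k) u_{kJ}|² ] − ρ(z) [ i∂∂̄ρ(u,u)(z) − 2sK Re( Σ'_{|J|=q−1} Σ_{k,l=1}^n z_k conj(u_{kJ}) (∂ρ/∂z_l)(z) u_{lJ} ) ] + (1−s) Σ'_{|J|=q−1} |Σ_{k=1}^n (∂ρ/∂z_k)(z) u_{kJ}|² }. -/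

import Mathlib

open scoped BigOperators
open MeasureTheory

namespace HM

/-- The finset of strictly increasing multi-indices of length `q` with entries in `Fin n`. -/
def Incr (n q : ℕ) : Finset (Fin q → Fin n) :=
  Finset.univ.filter (fun I => ∀ a b : Fin q, a < b → I a < I b)

/-- Prepend the index `k` to a `(q-1)`-tuple `J`, giving the `q`-tuple `kJ`. -/
def cons' {n : ℕ} (q : ℕ) (k : Fin n) (J : Fin (q - 1) → Fin n) : Fin q → Fin n :=
  fun i => if h : (i : ℕ) = 0 then k else J ⟨(i : ℕ) - 1, by have := i.isLt; omega⟩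

/-- A (0,q)-coefficient system: an antisymmetric assignment of complex numbers to q-tuples
(hence vanishing on tuples with a repeated index). -/
def IsCoeff {n q : ℕ} (u : (Fin q → Fin n) → ℂ) : Prop :=
  ∀ (σ : Equiv.Perm (Fin q)) (I : Fin q → Fin n),
    u (I ∘ σ) = ((Equiv.Perm.sign σ : ℤ) : ℂ) * u I

/-- `|u|²`, the sum of `|u_I|²` over strictly increasing multi-indices `I`. -/
noncomputable def nSq {n q : ℕ} (u : (Fin q → Fin n) → ℂ) : ℝ :=
  ∑ I ∈ Incr n q, ‖u I‖ ^ 2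

/-- The Hessian form of a matrix `H` on coefficient systems:
`H(u,v) = Σ'_{|J|=q-1} Σ_{k,l} H_{lk} u_{lJ} conj(v_{kJ})`. -/
noncomputable def mForm {n : ℕ} (q : ℕ) (H : Matrix (Fin n) (Fin n) ℂ)
    (u v : (Fin q → Fin n) → ℂ) : ℂ :=
  ∑ J ∈ Incr n (q - 1), ∑ k : Fin n, ∑ l : Fin n,
    H l k * u (cons' q l J) * star (v (cons' q k J))

/-- `σ^I_J`: the sign of the permutation rearranging `I` into `J`; `0` if `J` is not a
rearrangement of `I` (in particular `0` if `I` has a repeated entry). -/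
def permSign {n p : ℕ} (I J : Fin p → Fin n) : ℤ :=
  if Function.Injective I then
    ∑ π : Equiv.Perm (Fin p), if J = I ∘ π then ((Equiv.Perm.sign π : ℤ)) else 0
  else 0

/-- The Wirtinger derivative `∂f/∂z_k` of a complex-valued function, via real Fréchet
derivatives: `½(∂f/∂x_k − i ∂f/∂y_k)`. -/
noncomputable def dz {n : ℕ} (f : (Fin n → ℂ) → ℂ) (k : Fin n) (z : Fin n → ℂ) : ℂ :=
  (1/2 : ℂ) * (fderiv ℝ f z (Pi.single k 1) - Complex.I * fderiv ℝ f z (Pi.single k Complex.I))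

/-- The Wirtinger derivative `∂f/∂z̄_k`: `½(∂f/∂x_k + i ∂f/∂y_k)`. -/
noncomputable def dzbar {n : ℕ} (f : (Fin n → ℂ) → ℂ) (k : Fin n) (z : Fin n → ℂ) : ℂ :=
  (1/2 : ℂ) * (fderiv ℝ f z (Pi.single k 1) + Complex.I * fderiv ℝ f z (Pi.single k Complex.I))

/-- The mixed Wirtinger Hessian `∂²f/∂z_l∂z̄_k` of a real-valued function. -/
noncomputable def hessW {n : ℕ} (f : (Fin n → ℂ) → ℝ) (l k : Fin n) (z : Fin n → ℂ) : ℂ :=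
  dz (fun w => dzbar (fun y => (f y : ℂ)) k w) l z

/-- The Hessian form `i∂∂̄f(u,u)(z) = Σ'_{|J|=q-1} Σ_{k,l} ∂²f/∂z_l∂z̄_k(z) u_{lJ} conj(u_{kJ})`. -/
noncomputable def hForm {n : ℕ} (q : ℕ) (f : (Fin n → ℂ) → ℝ)
    (u : (Fin q → Fin n) → ℂ) (z : Fin n → ℂ) : ℂ :=
  ∑ J ∈ Incr n (q - 1), ∑ k : Fin n, ∑ l : Fin n,
    hessW f l k z * u (cons' q l J) * star (u (cons' q k J))

/-- Coefficient of `∂̄u` on the `(q+1)`-tuple `M`: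
`(∂̄u)_M = Σ_k Σ'_{|J|=q} σ^{kJ}_M ∂u_J/∂z̄_k`. -/
noncomputable def dbarC {n : ℕ} (q : ℕ) (u : (Fin q → Fin n) → (Fin n → ℂ) → ℂ)
    (M : Fin (q + 1) → Fin n) (z : Fin n → ℂ) : ℂ :=
  ∑ k : Fin n, ∑ J ∈ Incr n q, ((permSign (cons' (q + 1) k J) M : ℤ) : ℂ) * dzbar (u J) k z

/-- Coefficient of `ϑu` on the `(q-1)`-tuple `J`: `(ϑu)_J = −Σ_l ∂u_{lJ}/∂z_l`. -/
noncomputable def thetaC {n : ℕ} (q : ℕ) (u : (Fin q → Fin n) → (Fin n → ℂ) → ℂ)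
    (J : Fin (q - 1) → Fin n) (z : Fin n → ℂ) : ℂ :=
  -∑ l : Fin n, dz (u (cons' q l J)) l z

/-- Pointwise `|∂̄u|²`. -/
noncomputable def dbarSq {n : ℕ} (q : ℕ) (u : (Fin q → Fin n) → (Fin n → ℂ) → ℂ)
    (z : Fin n → ℂ) : ℝ :=
  ∑ M ∈ Incr n (q + 1), ‖dbarC q u M z‖ ^ 2

/-- Pointwise `|ϑu|²`. -/
noncomputable def thetaSq {n : ℕ} (q : ℕ) (u : (Fin q → Fin n) → (Fin n → ℂ) → ℂ)
    (z : Fin n → ℂ) : ℝ :=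
  ∑ J ∈ Incr n (q - 1), ‖thetaC q u J z‖ ^ 2

/-- Remove the `i`-th entry of a `j`-tuple, giving a `(j-1)`-tuple. -/
def removeIdx {n j : ℕ} (I : Fin j → Fin n) (i : Fin j) : Fin (j - 1) → Fin n :=
  fun t => if (t : ℕ) < (i : ℕ) then I ⟨t, by have := t.isLt; omega⟩
    else I ⟨(t : ℕ) + 1, by have := t.isLt; omega⟩

/-- The increasing `j`-tuple listing a finset `S` (with default `d` out of range). -/
def sortedTuple {n : ℕ} (j : ℕ) (S : Finset (Fin n)) (d : Fin n) : Fin j → Fin n :=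
  fun t => (S.sort (· ≤ ·)).getD t d

end HM

/-!
Near `z` one has `-(-r)^s = -exp (s ψ)` with `ψ = log (-ρ) - K|z|²`, and the complex Hessian obeys
the chain rule `∂∂̄(χ ∘ g) = χ'(g) ∂∂̄g + χ''(g) ∂g ∧ ∂̄g`. Used for `exp` and for `log` it
expresses the Hessian matrix of `-(-r)^s` through the Hessian matrix of `ρ`, the identity matrix
and rank-one matrices built from `∂ρ` and `z̄`. Passing to the form on coefficient systems is
linear in the matrix; rank-one matrices give the squared contractions, and the identity gives
`q|u|²` because every increasing `q`-tuple arises, up to sign, from exactly `q` pairs `(k, J)`.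
-/

namespace HM

open Filter Topology Matrix

section Multiindices

variable {n m q : ℕ}

theorem mem_Incr {I : Fin q → Fin n} : I ∈ Incr n q ↔ StrictMono I := by
  simp [Incr, StrictMono]

theorem cons'_succ_eq_cons (k : Fin n) (J : Fin m → Fin n) :
    cons' (m + 1) k J = (Fin.cons k J : Fin (m + 1) → Fin n) := by
  funext i
  cases i using Fin.cases <;> simp [cons']

-- Every injective tuple is uniquely `I ∘ σ` with `I` increasing and `σ` a permutation.
theorem sum_eq_factorial_nsmul_sum_Incr {M : Type*} [AddCommMonoid M]
    {f : (Fin m → Fin n) → M} (hperm : ∀ (σ : Equiv.Perm (Fin m)) I, f (I ∘ σ) = f I)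
    (hzero : ∀ I, ¬ Function.Injective I → f I = 0) :
    ∑ I, f I = m.factorial • ∑ I ∈ Incr n m, f I := by
  have hpairs : m.factorial • ∑ I ∈ Incr n m, f I
      = ∑ p ∈ Incr n m ×ˢ (Finset.univ : Finset (Equiv.Perm (Fin m))), f p.1 := by
    simp [Finset.sum_product, Finset.smul_sum, Fintype.card_perm]
  rw [hpairs]
  symm
  refine Finset.sum_of_injOn (fun p => p.1 ∘ p.2) ?injOn (by simp [Set.MapsTo]) ?surj
    fun p _ => (hperm p.2 p.1).symm
  case injOn =>
    rintro ⟨I, σ⟩ hI ⟨I', σ'⟩ hI' (h : I ∘ σ = I' ∘ σ')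
    simp only [Finset.coe_product, Set.mem_prod, Finset.mem_coe, mem_Incr] at hI hI'
    have hrange : Set.range I = Set.range I' := by
      rw [← σ.surjective.range_comp I, h, σ'.surjective.range_comp]
    obtain rfl := (StrictMono.range_inj hI.1 hI'.1).1 hrange
    have hσ : σ = σ' := Equiv.ext fun i => hI.1.injective (congrFun h i)
    rw [hσ]
  case surj =>
    refine fun I _ hI => hzero I fun hinj => hI ?_
    have hsort : StrictMono (I ∘ Tuple.sort I) :=
      (Tuple.monotone_sort I).strictMono_of_injective (hinj.comp (Tuple.sort I).injective)
    refine ⟨(I ∘ Tuple.sort I, (Tuple.sort I).symm), by simpa [mem_Incr] using hsort, ?_⟩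
    funext i
    simp

end Multiindices

section Coefficients

variable {n m q : ℕ}

theorem IsCoeff.norm_comp_perm {u : (Fin q → Fin n) → ℂ} (hu : IsCoeff u)
    (σ : Equiv.Perm (Fin q)) (I : Fin q → Fin n) : ‖u (I ∘ σ)‖ = ‖u I‖ := by
  rcases Int.units_eq_one_or (Equiv.Perm.sign σ) with h | h <;> simp [hu σ I, h]

theorem IsCoeff.eq_zero_of_not_injective {u : (Fin q → Fin n) → ℂ} (hu : IsCoeff u)
    {I : Fin q → Fin n} (hI : ¬ Function.Injective I) : u I = 0 := by
  obtain ⟨a, b, hIab, hab⟩ := Function.not_injective_iff.1 hI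
  have hswap : I ∘ Equiv.swap a b = I := by
    rw [Equiv.comp_swap_eq_update, hIab, Function.update_eq_self, ← hIab, Function.update_eq_self]
  have hneg : u I = -u I := by
    simpa [hswap, Equiv.Perm.sign_swap hab] using hu (Equiv.swap a b) I
  exact self_eq_neg.1 hneg

-- Multiplied by `m.factorial`, both sides become the sum of `‖u I‖ ^ 2` over all `(m + 1)`-tuples.
theorem IsCoeff.sum_norm_sq_cons {u : (Fin (m + 1) → Fin n) → ℂ} (hu : IsCoeff u) :
    ∑ J ∈ Incr n m, ∑ k, ‖u (Fin.cons k J)‖ ^ 2 = (m + 1) * nSq u := by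
  have hJ := sum_eq_factorial_nsmul_sum_Incr
    (f := fun J : Fin m → Fin n => ∑ k, ‖u (Fin.cons k J)‖ ^ 2)
    (fun σ J => Finset.sum_congr rfl fun k _ => by
      have hcons : (Fin.cons k (J ∘ σ) : Fin (m + 1) → Fin n)
          = Fin.cons k J ∘ Equiv.Perm.decomposeFin.symm (0, σ) := by
        funext i
        cases i using Fin.cases <;> simp
      rw [hcons, hu.norm_comp_perm])
    (fun J hJ => Finset.sum_eq_zero fun k _ => by
      rw [hu.eq_zero_of_not_injective fun h => hJ (Fin.cons_injective_iff.1 h).2]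
      simp)
  have hI := sum_eq_factorial_nsmul_sum_Incr (f := fun I => ‖u I‖ ^ 2)
    (fun σ I => by rw [hu.norm_comp_perm])
    (fun I hI => by simp [hu.eq_zero_of_not_injective hI])
  have hall : ∑ I, ‖u I‖ ^ 2 = ∑ J : Fin m → Fin n, ∑ k, ‖u (Fin.cons k J)‖ ^ 2 := by
    rw [← (Fin.consEquiv fun _ => Fin n).sum_comp, Fintype.sum_prod_type_right]
    rfl
  refine mul_left_cancel₀ (Nat.cast_ne_zero.2 m.factorial_ne_zero) ?_
  rw [hall, hJ, Nat.factorial_succ] at hI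
  simp only [nsmul_eq_mul, Nat.cast_mul, Nat.cast_add_one] at hI
  rw [hI, nSq]
  ring

end Coefficients

section MatrixForm

variable {n : ℕ} (q : ℕ) (G H : Matrix (Fin n) (Fin n) ℂ) (u v : (Fin q → Fin n) → ℂ)

theorem mForm_add : mForm q (G + H) u v = mForm q G u v + mForm q H u v := by
  simp [mForm, add_mul, Finset.sum_add_distrib]

theorem mForm_sub : mForm q (G - H) u v = mForm q G u v - mForm q H u v := by
  simp [mForm, sub_mul, Finset.sum_sub_distrib]

theorem mForm_smul (c : ℂ) : mForm q (c • H) u v = c * mForm q H u v := by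
  simp [mForm, mul_assoc, Finset.mul_sum]

theorem mForm_conjTranspose : mForm q Hᴴ u v = star (mForm q H v u) := by
  simp only [mForm, star_sum]
  refine Finset.sum_congr rfl fun J _ => ?_
  rw [Finset.sum_comm]
  refine Finset.sum_congr rfl fun k _ => Finset.sum_congr rfl fun l _ => ?_
  simp only [conjTranspose_apply, star_mul', star_star]
  ring

theorem mForm_add_conjTranspose :
    mForm q (H + Hᴴ) u u = 2 * ((mForm q H u u).re : ℂ) := by
  rw [mForm_add, mForm_conjTranspose, Complex.star_def, Complex.add_conj]
  push_cast
  rfl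

theorem mForm_vecMulVec_star (a : Fin n → ℂ) :
    mForm q (vecMulVec a (star a)) u u
      = ((∑ J ∈ Incr n (q - 1), ‖∑ k, a k * u (cons' q k J)‖ ^ 2 : ℝ) : ℂ) := by
  rw [Complex.ofReal_sum]
  refine Finset.sum_congr rfl fun J _ => ?_
  rw [Complex.ofReal_pow, ← Complex.mul_conj', ← Complex.star_def, star_sum, Finset.sum_mul_sum,
    Finset.sum_comm]
  refine Finset.sum_congr rfl fun k _ => Finset.sum_congr rfl fun l _ => ?_
  simp only [vecMulVec_apply, Pi.star_apply, star_mul']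
  ring

variable {q u}

theorem mForm_one (hq : 1 ≤ q) (hu : IsCoeff u) : mForm q 1 u u = q * (nSq u : ℂ) := by
  obtain ⟨m, rfl⟩ := Nat.exists_eq_add_of_le' hq
  have h := congrArg (Complex.ofReal) hu.sum_norm_sq_cons
  push_cast at h
  simp [mForm, one_apply, cons'_succ_eq_cons, Complex.mul_conj', h]

end MatrixForm

section Wirtinger

variable {n : ℕ} {z : Fin n → ℂ}

theorem dz_congr {f g : (Fin n → ℂ) → ℂ} (h : f =ᶠ[𝓝 z] g) (k : Fin n) :
    dz f k z = dz g k z := by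
  rw [dz, dz, h.fderiv_eq]

theorem dzbar_congr {f g : (Fin n → ℂ) → ℂ} (h : f =ᶠ[𝓝 z] g) (k : Fin n) :
    dzbar f k z = dzbar g k z := by
  rw [dzbar, dzbar, h.fderiv_eq]

theorem dz_sub {f g : (Fin n → ℂ) → ℂ} (hf : DifferentiableAt ℝ f z)
    (hg : DifferentiableAt ℝ g z) (k : Fin n) :
    dz (fun w => f w - g w) k z = dz f k z - dz g k z := by
  simp only [dz, fderiv_fun_sub hf hg, _root_.sub_apply]
  ring

theorem dz_mul {f g : (Fin n → ℂ) → ℂ} (hf : DifferentiableAt ℝ f z)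
    (hg : DifferentiableAt ℝ g z) (k : Fin n) :
    dz (fun w => f w * g w) k z = f z * dz g k z + dz f k z * g z := by
  simp only [dz, fderiv_fun_mul hf hg, _root_.add_apply, _root_.smul_apply, smul_eq_mul]
  ring

theorem dz_coord (l k : Fin n) : dz (fun w => w k) l z = (1 : Matrix (Fin n) (Fin n) ℂ) l k := by
  have h : fderiv ℝ (fun w : Fin n → ℂ => w k) z = ContinuousLinearMap.proj k :=
    (ContinuousLinearMap.proj (R := ℝ) (φ := fun _ : Fin n => ℂ) k).fderiv
  rcases eq_or_ne l k with rfl | hlk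
  · norm_num [dz, h]
  · simp [dz, h, hlk]

theorem dzbar_star (f : (Fin n → ℂ) → ℂ) (k : Fin n) :
    dzbar (fun w => star (f w)) k z = star (dz f k z) := by
  simp only [dz, dzbar, fderiv_star]
  simp

theorem dzbar_ofReal (f : (Fin n → ℂ) → ℝ) (k : Fin n) :
    dzbar (fun w => (f w : ℂ)) k z = star (dz (fun w => (f w : ℂ)) k z) := by
  simp [← dzbar_star]

theorem dz_ofReal {f : (Fin n → ℂ) → ℝ} {L : (Fin n → ℂ) →L[ℝ] ℝ} (h : HasFDerivAt f L z)
    (k : Fin n) :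
    dz (fun w => (f w : ℂ)) k z
      = 1 / 2 * ((L (Pi.single k 1) : ℂ) - Complex.I * L (Pi.single k Complex.I)) := by
  have hcast : HasFDerivAt (fun w => (f w : ℂ)) (Complex.ofRealCLM.comp L) z :=
    Complex.ofRealCLM.hasFDerivAt.comp z h
  simp [dz, hcast.fderiv]

theorem dz_ofReal_comp {φ : ℝ → ℝ} {g : (Fin n → ℂ) → ℝ} (hφ : DifferentiableAt ℝ φ (g z))
    (hg : DifferentiableAt ℝ g z) (k : Fin n) :
    dz (fun w => (φ (g w) : ℂ)) k z = deriv φ (g z) * dz (fun w => (g w : ℂ)) k z := by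
  have hcomp : HasFDerivAt (fun w => φ (g w)) (deriv φ (g z) • fderiv ℝ g z) z :=
    hφ.hasDerivAt.comp_hasFDerivAt z hg.hasFDerivAt
  rw [dz_ofReal hcomp, dz_ofReal hg.hasFDerivAt]
  simp only [_root_.smul_apply, smul_eq_mul, Complex.ofReal_mul]
  ring

theorem differentiableAt_ofReal {f : (Fin n → ℂ) → ℝ} (hf : DifferentiableAt ℝ f z) :
    DifferentiableAt ℝ (fun w => (f w : ℂ)) z :=
  Complex.ofRealCLM.differentiableAt.comp z hf

theorem differentiableAt_dzbar_ofReal {f : (Fin n → ℂ) → ℝ} (hf : ContDiffAt ℝ 2 f z)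
    (k : Fin n) : DifferentiableAt ℝ (dzbar (fun w => (f w : ℂ)) k) z := by
  have hcast : ContDiffAt ℝ 2 (fun w => (f w : ℂ)) z :=
    Complex.ofRealCLM.contDiff.contDiffAt.comp z hf
  have hfderiv : DifferentiableAt ℝ (fderiv ℝ fun w => (f w : ℂ)) z :=
    (hcast.fderiv_right (m := 1) one_add_one_eq_two.le).differentiableAt one_ne_zero
  unfold dzbar
  fun_prop

theorem eventually_differentiableAt {𝕜 E F : Type*} [NontriviallyNormedField 𝕜]
    [NormedAddCommGroup E] [NormedSpace 𝕜 E] [NormedAddCommGroup F] [NormedSpace 𝕜 F] {f : E → F}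
    {x : E} {m : WithTop ℕ∞} (hf : ContDiffAt 𝕜 m f x) (hm : m ≠ 0) :
    ∀ᶠ y in 𝓝 x, DifferentiableAt 𝕜 f y :=
  ((hf.of_le (ENat.one_le_iff_ne_zero_withTop.2 hm)).eventually (by simp)).mono
    fun _ hy => hy.differentiableAt one_ne_zero

theorem contDiff_sum_norm_sq {m : WithTop ℕ∞} :
    ContDiff ℝ m fun w : Fin n → ℂ => ∑ k, ‖w k‖ ^ 2 :=
  ContDiff.sum fun k _ => (contDiff_apply ℝ ℂ k).norm_sq ℝ

theorem dz_sum_norm_sq (k : Fin n) :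
    dz (fun w => ((∑ j, ‖w j‖ ^ 2 : ℝ) : ℂ)) k z = star (z k) := by
  have hproj (j : Fin n) : HasFDerivAt (fun w : Fin n → ℂ => w j)
      (ContinuousLinearMap.proj (R := ℝ) j) z :=
    (ContinuousLinearMap.proj (R := ℝ) (φ := fun _ : Fin n => ℂ) j).hasFDerivAt
  rw [dz_ofReal (HasFDerivAt.fun_sum fun j _ => (hproj j).norm_sq)]
  have hsingle (c : ℂ) (j : Fin n) :
      inner ℝ (z j) (Pi.single (M := fun _ => ℂ) k c j) = if j = k then inner ℝ (z k) c else 0 := by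
    rcases eq_or_ne j k with rfl | hjk <;> simp [*]
  apply Complex.ext <;> simp [hsingle, Complex.inner]

end Wirtinger

section ComplexHessian

variable {n : ℕ} {z : Fin n → ℂ}

/-- The `(1,0)`-gradient `(∂f/∂z_k)_k` of a real-valued function. -/
noncomputable def dzVec (f : (Fin n → ℂ) → ℝ) (z : Fin n → ℂ) : Fin n → ℂ :=
  fun k => dz (fun w => (f w : ℂ)) k z

/-- The complex Hessian matrix of a real-valued function. The row index is the holomorphic
derivative, so that `hForm q f u z` is `mForm q (hessMat f z) u u`. -/
noncomputable def hessMat (f : (Fin n → ℂ) → ℝ) (z : Fin n → ℂ) : Matrix (Fin n) (Fin n) ℂ :=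
  Matrix.of fun l k => hessW f l k z

theorem hForm_eq_mForm (q : ℕ) (f : (Fin n → ℂ) → ℝ) (u : (Fin q → Fin n) → ℂ) :
    hForm q f u z = mForm q (hessMat f z) u u :=
  rfl

theorem hessMat_congr {f g : (Fin n → ℂ) → ℝ} (h : f =ᶠ[𝓝 z] g) : hessMat f z = hessMat g z := by
  ext l k
  refine dz_congr (h.eventually_nhds.mono fun w hw => dzbar_congr ?_ k) l
  exact EventuallyEq.fun_comp hw Complex.ofReal

theorem dzVec_comp {φ : ℝ → ℝ} {g : (Fin n → ℂ) → ℝ} (hφ : DifferentiableAt ℝ φ (g z))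
    (hg : DifferentiableAt ℝ g z) :
    dzVec (fun w => φ (g w)) z = ((deriv φ (g z) : ℝ) : ℂ) • dzVec g z :=
  funext fun k => dz_ofReal_comp hφ hg k

theorem hessMat_comp {φ : ℝ → ℝ} {g : (Fin n → ℂ) → ℝ} (hφ : ContDiffAt ℝ 2 φ (g z))
    (hg : ContDiffAt ℝ 2 g z) :
    hessMat (fun w => φ (g w)) z
      = ((deriv φ (g z) : ℝ) : ℂ) • hessMat g z
        + ((deriv (deriv φ) (g z) : ℝ) : ℂ) • vecMulVec (dzVec g z) (star (dzVec g z)) := by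
  have hgz := hg.differentiableAt two_ne_zero
  have hφ' : DifferentiableAt ℝ (deriv φ) (g z) :=
    (hφ.derivWithin (m := 1) (by norm_num)).differentiableAt one_ne_zero
  ext l k
  have hdzbar : dzbar (fun w => (φ (g w) : ℂ)) k =ᶠ[𝓝 z]
      fun w => ((deriv φ (g w) : ℝ) : ℂ) * dzbar (fun w => (g w : ℂ)) k w := by
    filter_upwards [eventually_differentiableAt hg two_ne_zero,
      hgz.continuousAt.eventually (eventually_differentiableAt hφ two_ne_zero)] with w hgw hφw
    simp [dzbar_ofReal, dz_ofReal_comp hφw hgw]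
  calc dz (dzbar (fun w => (φ (g w) : ℂ)) k) l z
      = deriv φ (g z) * dz (dzbar (fun w => (g w : ℂ)) k) l z
        + dz (fun w => ((deriv φ (g w) : ℝ) : ℂ)) l z * dzbar (fun w => (g w : ℂ)) k z := by
        rw [dz_congr hdzbar]
        exact dz_mul (differentiableAt_ofReal (hφ'.comp z hgz))
          (differentiableAt_dzbar_ofReal hg k) l
    _ = _ := by
        rw [dz_ofReal_comp hφ' hgz, dzbar_ofReal, mul_assoc]
        rfl

theorem dzVec_sub {f g : (Fin n → ℂ) → ℝ} (hf : DifferentiableAt ℝ f z)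
    (hg : DifferentiableAt ℝ g z) :
    dzVec (fun w => f w - g w) z = dzVec f z - dzVec g z := by
  ext k
  simp only [dzVec, Complex.ofReal_sub, Pi.sub_apply]
  exact dz_sub (differentiableAt_ofReal hf) (differentiableAt_ofReal hg) k

theorem hessMat_sub {f g : (Fin n → ℂ) → ℝ} (hf : ContDiffAt ℝ 2 f z)
    (hg : ContDiffAt ℝ 2 g z) :
    hessMat (fun w => f w - g w) z = hessMat f z - hessMat g z := by
  ext l k
  have hdzbar : dzbar (fun w => ((f w - g w : ℝ) : ℂ)) k =ᶠ[𝓝 z]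
      fun w => dzbar (fun w => (f w : ℂ)) k w - dzbar (fun w => (g w : ℂ)) k w := by
    filter_upwards [eventually_differentiableAt hf two_ne_zero,
      eventually_differentiableAt hg two_ne_zero] with w hfw hgw
    simp only [dzbar_ofReal, ← star_sub]
    exact congrArg star (congrFun (dzVec_sub hfw hgw) k)
  exact (dz_congr hdzbar l).trans <|
    dz_sub (differentiableAt_dzbar_ofReal hf k) (differentiableAt_dzbar_ofReal hg k) l

theorem dzVec_const_mul {f : (Fin n → ℂ) → ℝ} (hf : DifferentiableAt ℝ f z) (c : ℝ) :
    dzVec (fun w => c * f w) z = (c : ℂ) • dzVec f z := by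
  simp [dzVec_comp (φ := (c * ·)) (by fun_prop) hf]

theorem hessMat_const_mul {f : (Fin n → ℂ) → ℝ} (hf : ContDiffAt ℝ 2 f z) (c : ℝ) :
    hessMat (fun w => c * f w) z = (c : ℂ) • hessMat f z := by
  simp [hessMat_comp (φ := (c * ·)) (by fun_prop) hf]

theorem dzVec_sum_norm_sq : dzVec (fun w => ∑ k, ‖w k‖ ^ 2) z = star z :=
  funext dz_sum_norm_sq

theorem hessMat_sum_norm_sq : hessMat (fun w => ∑ k, ‖w k‖ ^ 2) z = 1 := by
  ext l k
  have hdzbar :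
      dzbar (fun w => ((∑ j, ‖w j‖ ^ 2 : ℝ) : ℂ)) k = fun w : Fin n → ℂ => w k := by
    funext w
    rw [dzbar_ofReal, dz_sum_norm_sq, star_star]
  exact (congrArg (dz · l z) hdzbar).trans (dz_coord l k)

theorem dzVec_log {f : (Fin n → ℂ) → ℝ} (hf : DifferentiableAt ℝ f z) (hz : f z ≠ 0) :
    dzVec (fun w => Real.log (f w)) z = (f z : ℂ)⁻¹ • dzVec f z := by
  simp [dzVec_comp (Real.differentiableAt_log hz) hf]

theorem hessMat_log {f : (Fin n → ℂ) → ℝ} (hf : ContDiffAt ℝ 2 f z) (hz : f z ≠ 0) :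
    hessMat (fun w => Real.log (f w)) z
      = (f z : ℂ)⁻¹ • hessMat f z
        - ((f z : ℂ) ^ 2)⁻¹ • vecMulVec (dzVec f z) (star (dzVec f z)) := by
  simp [hessMat_comp (Real.contDiffAt_log.2 hz) hf, sub_eq_add_neg]

theorem hessMat_exp {f : (Fin n → ℂ) → ℝ} (hf : ContDiffAt ℝ 2 f z) :
    hessMat (fun w => Real.exp (f w)) z
      = ((Real.exp (f z) : ℝ) : ℂ) •
        (hessMat f z + vecMulVec (dzVec f z) (star (dzVec f z))) := by
  simp [hessMat_comp Real.contDiff_exp.contDiffAt hf]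

end ComplexHessian

-- `Real.log x` stands for `log (-x)` here: Mathlib's logarithm of a negative `x` is `log |x|`.
theorem neg_rpow_exp_neg_mul_eq {x : ℝ} (hx : x < 0) (s t : ℝ) :
    (-(Real.exp (-t) * x)) ^ s = Real.exp (s * (Real.log x - t)) := by
  have hneg : 0 < -(Real.exp (-t) * x) := neg_pos.2 (mul_neg_of_pos_of_neg (Real.exp_pos _) hx)
  rw [Real.rpow_def_of_pos hneg, Real.log_neg_eq_log,
    Real.log_mul (Real.exp_ne_zero _) hx.ne, Real.log_exp]
  ring_nf

theorem exp_mul_log_sub_eq {x : ℝ} (hx : x < 0) (s t : ℝ) :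
    Real.exp (s * (Real.log x - t)) = (-x) ^ (s - 2) * Real.exp (-(s * t)) * x ^ 2 := by
  have hx' : 0 < -x := neg_pos.2 hx
  rw [Real.rpow_sub hx', Real.rpow_two, Real.rpow_def_of_pos hx', Real.log_neg_eq_log, neg_sq,
    mul_right_comm, div_mul_cancel₀ _ (pow_ne_zero 2 hx.ne), ← Real.exp_add]
  ring_nf

theorem hessMat_neg_rpow_exp_neg_mul {n : ℕ} {ρ φ : (Fin n → ℂ) → ℝ} {z : Fin n → ℂ}
    (hρ : ContDiffAt ℝ 2 ρ z) (hφ : ContDiffAt ℝ 2 φ z) (hz : ρ z < 0) (s : ℝ) :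
    hessMat (fun w => -(-(Real.exp (-φ w) * ρ w)) ^ s) z
      = ((s * (-ρ z) ^ (s - 2) * Real.exp (-(s * φ z)) : ℝ) : ℂ) •
        ((ρ z : ℂ) ^ 2 • (hessMat φ z - (s : ℂ) • vecMulVec (dzVec φ z) (star (dzVec φ z)))
          - (ρ z : ℂ) • (hessMat ρ z - (s : ℂ) • (vecMulVec (dzVec ρ z) (star (dzVec φ z))
            + (vecMulVec (dzVec ρ z) (star (dzVec φ z)))ᴴ))
          + (1 - s : ℂ) • vecMulVec (dzVec ρ z) (star (dzVec ρ z))) := by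
  have hF : (fun w => -(-(Real.exp (-φ w) * ρ w)) ^ s) =ᶠ[𝓝 z]
      fun w => -1 * Real.exp (s * (Real.log (ρ w) - φ w)) := by
    filter_upwards [hρ.continuousAt.eventually_lt_const hz] with w hw
    rw [neg_rpow_exp_neg_mul_eq hw, neg_one_mul]
  have hlog : ContDiffAt ℝ 2 (fun w => Real.log (ρ w)) z := hρ.log hz.ne
  have hψ : ContDiffAt ℝ 2 (fun w => Real.log (ρ w) - φ w) z := hlog.sub hφ
  have hsψ : ContDiffAt ℝ 2 (fun w => s * (Real.log (ρ w) - φ w)) z := contDiffAt_const.mul hψ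
  rw [hessMat_congr hF, hessMat_const_mul hsψ.exp, hessMat_exp hsψ, hessMat_const_mul hψ,
    dzVec_const_mul (hψ.differentiableAt two_ne_zero), hessMat_sub hlog hφ,
    dzVec_sub (hlog.differentiableAt two_ne_zero) (hφ.differentiableAt two_ne_zero),
    hessMat_log hρ hz.ne, dzVec_log (hρ.differentiableAt two_ne_zero) hz.ne,
    exp_mul_log_sub_eq hz]
  have hρz : (ρ z : ℂ) ≠ 0 := Complex.ofReal_ne_zero.2 hz.ne
  ext l k
  simp only [Matrix.smul_apply, Matrix.add_apply, Matrix.sub_apply, vecMulVec_apply,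
    conjTranspose_apply, Pi.smul_apply, Pi.sub_apply, Pi.star_apply, Complex.star_def,
    Complex.conj_ofReal, map_mul, map_sub, map_inv₀, Complex.conj_conj, smul_eq_mul]
  push_cast
  field_simp
  ring

theorem hessMat_neg_rpow_gaussian_mul {n : ℕ} {ρ : (Fin n → ℂ) → ℝ} {z : Fin n → ℂ}
    (hρ : ContDiffAt ℝ 2 ρ z) (hz : ρ z < 0) (K s : ℝ) :
    hessMat (fun w => -(-(Real.exp (-K * ∑ k, ‖w k‖ ^ 2) * ρ w)) ^ s) z
      = ((s * (-ρ z) ^ (s - 2) * Real.exp (-(s * K) * ∑ k, ‖z k‖ ^ 2) : ℝ) : ℂ) •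
        (((K * ρ z ^ 2 : ℝ) : ℂ) • (1 - ((s * K : ℝ) : ℂ) • vecMulVec (star z) (star (star z)))
          - (ρ z : ℂ) • (hessMat ρ z - ((s * K : ℝ) : ℂ) •
              (vecMulVec (dzVec ρ z) z + (vecMulVec (dzVec ρ z) z)ᴴ))
          + ((1 - s : ℝ) : ℂ) • vecMulVec (dzVec ρ z) (star (dzVec ρ z))) := by
  have hN : ContDiffAt ℝ 2 (fun w : Fin n → ℂ => ∑ k, ‖w k‖ ^ 2) z :=
    contDiff_sum_norm_sq.contDiffAt
  have hweight := hessMat_neg_rpow_exp_neg_mul hρ ((contDiffAt_const (c := K)).mul hN) hz s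
  rw [hessMat_const_mul hN, dzVec_const_mul (hN.differentiableAt two_ne_zero),
    hessMat_sum_norm_sq, dzVec_sum_norm_sq] at hweight
  simp only [neg_mul, mul_assoc] at hweight ⊢
  rw [hweight]
  congr 1
  ext l k
  simp only [Matrix.smul_apply, Matrix.add_apply, Matrix.sub_apply, vecMulVec_apply,
    conjTranspose_apply, Pi.smul_apply, Pi.star_apply, Complex.star_def, Complex.conj_ofReal,
    map_mul, Complex.conj_conj, smul_eq_mul]
  push_cast
  ring

end HM

theorem hessian_of_weighted_power_general {n : ℕ} {ρ : (Fin n → ℂ) → ℝ} {z : Fin n → ℂ}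
    (hρ : ContDiffAt ℝ 2 ρ z) (hz : ρ z < 0) (K s : ℝ) {q : ℕ} (hq : 1 ≤ q)
    {u : (Fin q → Fin n) → ℂ} (hu : HM.IsCoeff u) :
    HM.hForm q (fun w => -((-(Real.exp (-K * ∑ k, ‖w k‖ ^ 2) * ρ w)) ^ s)) u z
      = ((s * (-(ρ z)) ^ (s - 2) * Real.exp (-(s * K) * ∑ k, ‖z k‖ ^ 2) : ℝ) : ℂ) *
        (((K * ρ z ^ 2 : ℝ) : ℂ) *
            ((q : ℂ) * ((HM.nSq u : ℝ) : ℂ)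
              - ((s * K : ℝ) : ℂ) * ((∑ J ∈ HM.Incr n (q - 1),
                  ‖∑ k, (starRingEnd ℂ) (z k) * u (HM.cons' q k J)‖ ^ 2 : ℝ) : ℂ))
          - ((ρ z : ℝ) : ℂ) *
              (HM.hForm q ρ u z
                - ((2 * (s * K) : ℝ) : ℂ) *
                    (((∑ J ∈ HM.Incr n (q - 1), ∑ k, ∑ l,
                        z k * star (u (HM.cons' q k J)) *
                          HM.dz (fun w => ((ρ w : ℝ) : ℂ)) l z * u (HM.cons' q l J)).re : ℝ) : ℂ))
          + (((1 - s) : ℝ) : ℂ) * ((∑ J ∈ HM.Incr n (q - 1),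
              ‖∑ k, HM.dz (fun w => ((ρ w : ℝ) : ℂ)) k z * u (HM.cons' q k J)‖ ^ 2 : ℝ) : ℂ)) := by
  have hcross : HM.mForm q (Matrix.vecMulVec (HM.dzVec ρ z) z) u u
      = ∑ J ∈ HM.Incr n (q - 1), ∑ k, ∑ l, z k * star (u (HM.cons' q k J)) *
          HM.dz (fun w => ((ρ w : ℝ) : ℂ)) l z * u (HM.cons' q l J) :=
    Finset.sum_congr rfl fun J _ => Finset.sum_congr rfl fun k _ =>
      Finset.sum_congr rfl fun l _ => by
        simp only [Matrix.vecMulVec_apply, HM.dzVec]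
        ring
  rw [HM.hForm_eq_mForm, HM.hForm_eq_mForm, HM.hessMat_neg_rpow_gaussian_mul hρ hz,
    HM.mForm_smul, HM.mForm_add]
  simp only [HM.mForm_smul, HM.mForm_sub, HM.mForm_add_conjTranspose,
    HM.mForm_one hq hu, HM.mForm_vecMulVec_star, hcross]
  simp only [Pi.star_apply, Complex.star_def, HM.dzVec]
  push_cast
  ring

/-- the explicit Hessian computation for `r = e^{−K|z|²}ρ` from the proof
of Lemma 3.2. -/
theorem hessian_of_weighted_power (n : ℕ) (hn : 1 ≤ n)
    (U : Set (Fin n → ℂ)) (hU : IsOpen U)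
    (ρ : (Fin n → ℂ) → ℝ) (hρ : ContDiffOn ℝ 2 ρ U)
    (K : ℝ) (hK : 0 < K) (s : ℝ) (hs : s ∈ Set.Ioo (0 : ℝ) 1)
    (r : (Fin n → ℂ) → ℝ)
    (hr : ∀ w, r w = Real.exp (-K * ∑ k : Fin n, ‖w k‖ ^ 2) * ρ w) :
    ∀ z ∈ U, ρ z < 0 →
      ∀ q : ℕ, 1 ≤ q → q ≤ n → ∀ u : (Fin q → Fin n) → ℂ, HM.IsCoeff u →
        HM.hForm q (fun w => -((-(r w)) ^ s)) u z
          = ((s * (-(ρ z)) ^ (s - 2) *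
                Real.exp (-(s * K) * ∑ k : Fin n, ‖z k‖ ^ 2) : ℝ) : ℂ) *
              (((K * ρ z ^ 2 : ℝ) : ℂ) *
                  ((q : ℂ) * ((HM.nSq u : ℝ) : ℂ)
                    - ((s * K : ℝ) : ℂ) * ((∑ J ∈ HM.Incr n (q - 1),
                        ‖∑ k : Fin n, (starRingEnd ℂ) (z k) *
                          u (HM.cons' q k J)‖ ^ 2 : ℝ) : ℂ))
                - ((ρ z : ℝ) : ℂ) *
                    (HM.hForm q ρ u z
                      - ((2 * (s * K) : ℝ) : ℂ) *
                          (((∑ J ∈ HM.Incr n (q - 1), ∑ k : Fin n, ∑ l : Fin n,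
                              z k * star (u (HM.cons' q k J)) *
                                HM.dz (fun w => ((ρ w : ℝ) : ℂ)) l z *
                                u (HM.cons' q l J)).re : ℝ) : ℂ))
                + (((1 - s) : ℝ) : ℂ) * ((∑ J ∈ HM.Incr n (q - 1),
                    ‖∑ k : Fin n, HM.dz (fun w => ((ρ w : ℝ) : ℂ)) k z *
                      u (HM.cons' q k J)‖ ^ 2 : ℝ) : ℂ)) := by
  obtain rfl : r = _ := funext hr
  exact fun z hzU hz q hq _ u hu =>
    hessian_of_weighted_power_general (hρ.contDiffAt (hU.mem_nhds hzU)) hz K s hq hu
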